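/- Under the standing assumptions on the global optimization problem, if the problem is solvable, then every globally optimal solution attains the greatest lower bound: for every globally optimal solution x̃ ∈ 𝒳 and every i, F_i(x̃) = b_i. -/

import Mathlib

open scoped BigOperators

noncomputable section

/-- Max-plus product: `(A ⊗ x)_i = ⨆_j (A i j + x_j)` in `EReal`. -/
def maxPlus {m n : ℕ} (A : Matrix (Fin m) (Fin n) EReal) (x : Fin n → EReal)
    (i : Fin m) : EReal :=
  ⨆ j, A i j + x j

/-- Auxiliary subtraction: `s(b,a) = +∞` if `a = -∞`, else `b - a`. -/
def sSub (b a : EReal) : EReal := if a = ⊥ then ⊤ else b - a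

/-- Greatest subsolution `x*(A,b)_j = ⨅_i s(b_i, A i j)`. -/
def xstar {m n : ℕ} (A : Matrix (Fin m) (Fin n) EReal) (b : Fin m → EReal)
    (j : Fin n) : EReal :=
  ⨅ i, sSub (b i) (A i j)

/-- Objective function `F(x)_i = ⨆_j (A i j + x_j)` for real vectors `x`. -/
def objF {m n : ℕ} (A : Matrix (Fin m) (Fin n) EReal) (x : Fin n → ℝ)
    (i : Fin m) : EReal :=
  ⨆ j, A i j + (x j : EReal)

/-- `J = {j | k_j > 0}` as a finite set. -/
def Jset {n : ℕ} (k : Fin n → ℝ) : Finset (Fin n) :=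
  Finset.univ.filter (fun j => 0 < k j)

/-- Greatest lower bound `b_i = ((∑_{j ∈ J} k_j * A i j) + c) / (∑_{j ∈ J} k_j)`. -/
def glb {m n : ℕ} (A : Matrix (Fin m) (Fin n) EReal) (k : Fin n → ℝ) (c : ℝ)
    (i : Fin m) : EReal :=
  ((∑ j ∈ Jset k, (k j : EReal) * A i j) + (c : EReal)) /
    ((∑ j ∈ Jset k, k j : ℝ) : EReal)

/-- `xt` is a globally optimal solution of the problem `(A, k, c)`. -/
def IsOptimal {m n : ℕ} (A : Matrix (Fin m) (Fin n) EReal) (k : Fin n → ℝ)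
    (c : ℝ) (xt : Fin n → ℝ) : Prop :=
  (∑ j, k j * xt j = c) ∧
    ∀ x : Fin n → ℝ, (∑ j, k j * x j = c) → ∀ i, objF A xt i ≤ objF A x i

/-!
Everything happens in a single row `a` of `A`. For a real number `r`, the inequality
`⨆ j, a j + x j ≤ r` says that `y := r - x` is a real vector above `a`, and `∑ j, k j * x j = c`
prescribes its weighted sum as `(∑ j, k j) * r - c`. Real vectors above `a` with a prescribed
weighted sum `t` exist exactly when `∑ j ∈ J, k j * a j ≤ t` (an entry `-∞` only makes it easier,
since it may be replaced by any real number), so `r` is reached by some feasible `x` if and only if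
`b ≤ r`. Hence `b` is the infimum of the objective whether or not it is attained.
-/

lemma add_coe_le_coe_iff {u : EReal} {x r : ℝ} : u + x ≤ r ↔ u ≤ (r - x : ℝ) := by
  rw [EReal.coe_sub, EReal.le_sub_iff_add_le (.inl (EReal.coe_ne_bot x))
    (.inl (EReal.coe_ne_top x))]

lemma add_coe_div_coe_le_coe_iff {u : EReal} {c d r : ℝ} (hd : 0 < d) :
    (u + c) / d ≤ r ↔ u ≤ (d * r - c : ℝ) := by
  rw [EReal.div_le_iff_le_mul (EReal.coe_pos.2 hd) (EReal.coe_ne_top d), ← EReal.coe_mul,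
    add_coe_le_coe_iff]

lemma sum_filter_pos_mul {ι R : Type*} [Fintype ι] [NonUnitalNonAssocSemiring R]
    [PartialOrder R] [DecidableLT R] {k : ι → R} (hk : ∀ j, 0 ≤ k j) (x : ι → R) :
    ∑ j with 0 < k j, k j * x j = ∑ j, k j * x j :=
  Finset.sum_filter_of_ne fun j _ h ↦ (hk j).lt_of_ne' (left_ne_zero_of_mul h)

lemma isGLB_of_forall_le_coe_iff {S : Set EReal} {b : EReal}
    (h : ∀ r : ℝ, b ≤ r ↔ ∃ z ∈ S, z ≤ r) : IsGLB S b := by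
  constructor
  · intro z hz
    exact EReal.le_of_forall_lt_iff_le.1 fun r hzr ↦ (h r).2 ⟨z, hz, hzr.le⟩
  · intro l hl
    refine EReal.le_of_forall_lt_iff_le.1 fun r hbr ↦ ?_
    obtain ⟨z, hz, hzr⟩ := (h r).1 hbr.le
    exact (hl hz).trans hzr

section ERealSums

variable {ι : Type*}

lemma ereal_coe_sum (s : Finset ι) (f : ι → ℝ) :
    ((∑ j ∈ s, f j : ℝ) : EReal) = ∑ j ∈ s, (f j : EReal) :=
  map_sum (⟨⟨Real.toEReal, EReal.coe_zero⟩, EReal.coe_add⟩ : ℝ →+ EReal) f s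

lemma exists_le_coe_and_le_coe_sub_of_add_le_coe {u v : EReal} (hu : u ≠ ⊤) (hv : v ≠ ⊤) {t : ℝ}
    (h : u + v ≤ t) : ∃ p : ℝ, u ≤ p ∧ v ≤ (t - p : ℝ) := by
  induction u with
  | top => exact absurd rfl hu
  | bot => exact ⟨t - v.toReal, bot_le, by simpa using EReal.le_coe_toReal hv⟩
  | coe p => exact ⟨p, le_rfl, add_coe_le_coe_iff.1 (by rwa [add_comm])⟩

lemma sum_ne_top_of_forall_ne_top {s : Finset ι} {f : ι → EReal} (hf : ∀ j ∈ s, f j ≠ ⊤) :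
    ∑ j ∈ s, f j ≠ ⊤ :=
  Finset.sum_induction f (· ≠ ⊤) (fun _ _ ↦ EReal.add_ne_top) EReal.zero_ne_top hf

lemma exists_forall_le_coe_and_sum_eq {s : Finset ι} (hs : s.Nonempty) {f : ι → EReal}
    (hf : ∀ j ∈ s, f j ≠ ⊤) {t : ℝ} (h : ∑ j ∈ s, f j ≤ t) :
    ∃ g : ι → ℝ, (∀ j ∈ s, f j ≤ g j) ∧ ∑ j ∈ s, g j = t := by
  classical
  induction hs using Finset.Nonempty.cons_induction generalizing t with
  | singleton i => exact ⟨fun _ ↦ t, by simpa using h, by simp⟩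
  | cons i s hi _ ih =>
    rw [Finset.forall_mem_cons] at hf
    rw [Finset.sum_cons] at h
    obtain ⟨p, hp, hrest⟩ := exists_le_coe_and_le_coe_sub_of_add_le_coe hf.1
      (sum_ne_top_of_forall_ne_top hf.2) h
    obtain ⟨g, hg, hsum⟩ := ih hf.2 hrest
    have update_of_mem {j : ι} (hj : j ∈ s) : Function.update g i p j = g j :=
      Function.update_of_ne (ne_of_mem_of_not_mem hj hi) p g
    refine ⟨Function.update g i p, ?_, ?_⟩
    · rw [Finset.forall_mem_cons, Function.update_self]
      exact ⟨hp, fun j hj ↦ by rw [update_of_mem hj]; exact hg j hj⟩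
    · rw [Finset.sum_cons, Function.update_self, Finset.sum_congr rfl fun _ ↦ update_of_mem, hsum]
      ring

lemma sum_mul_le_coe_iff_exists {s : Finset ι} (hs : s.Nonempty) {w : ι → ℝ}
    (hw : ∀ j ∈ s, 0 < w j) {a : ι → EReal} (ha : ∀ j ∈ s, a j ≠ ⊤) {t : ℝ} :
    ∑ j ∈ s, (w j : EReal) * a j ≤ t ↔
      ∃ y : ι → ℝ, (∀ j ∈ s, a j ≤ y j) ∧ ∑ j ∈ s, w j * y j = t := by
  constructor
  · intro h
    have hwa : ∀ j ∈ s, (w j : EReal) * a j ≠ ⊤ := fun j hj ↦ by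
      simp [EReal.mul_ne_top, ha j hj, (hw j hj).le]
    obtain ⟨g, hg, hsum⟩ := exists_forall_le_coe_and_sum_eq hs hwa h
    refine ⟨fun j ↦ g j / w j, fun j hj ↦ ?_, ?_⟩
    · rw [EReal.coe_div, EReal.le_div_iff_mul_le (EReal.coe_pos.2 (hw j hj))
        (EReal.coe_ne_top _), mul_comm]
      exact hg j hj
    · rw [← hsum]
      exact Finset.sum_congr rfl fun j hj ↦ mul_div_cancel₀ (g j) (hw j hj).ne'
  · rintro ⟨y, hy, rfl⟩
    rw [ereal_coe_sum]
    refine Finset.sum_le_sum fun j hj ↦ ?_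
    rw [EReal.coe_mul]
    exact mul_le_mul_of_nonneg_left (hy j hj) (EReal.coe_nonneg.2 (hw j hj).le)

end ERealSums

section SingleRow

variable {ι : Type*} [Fintype ι] {a : ι → EReal} {k : ι → ℝ}

/-- The max-plus linear form with coefficient row `a`, at a real vector `x`; `objF A x i` is its
value for the row `A i`. -/
def rowObjective (a : ι → EReal) (x : ι → ℝ) : EReal :=
  ⨆ j, a j + (x j : EReal)

/-- The bound `b` for a single coefficient row `a`; `glb A k c i` is its value for the row `A i`. -/
def rowBound (a : ι → EReal) (k : ι → ℝ) (c : ℝ) : EReal :=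
  (∑ j with 0 < k j, (k j : EReal) * a j + c) / ((∑ j with 0 < k j, k j : ℝ) : EReal)

lemma sum_filter_pos_mul_le_coe_iff_exists (ha : ∀ j, a j ≠ ⊤) (hk : ∀ j, 0 ≤ k j)
    (hk0 : ∃ j, k j ≠ 0) {t : ℝ} :
    ∑ j with 0 < k j, (k j : EReal) * a j ≤ t ↔
      ∃ y : ι → ℝ, (∀ j, a j ≤ y j) ∧ ∑ j, k j * y j = t := by
  obtain ⟨i, hi⟩ := hk0
  have hJ : (Finset.univ.filter fun j ↦ 0 < k j).Nonempty := ⟨i, by simp [(hk i).lt_of_ne' hi]⟩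
  rw [sum_mul_le_coe_iff_exists hJ (by simp) (fun j _ ↦ ha j)]
  constructor
  · rintro ⟨y, hy, hsum⟩
    refine ⟨fun j ↦ if 0 < k j then y j else (a j).toReal, fun j ↦ ?_, ?_⟩
    · by_cases hj : 0 < k j
      · simpa only [if_pos hj] using hy j (by simpa using hj)
      · simpa only [if_neg hj] using EReal.le_coe_toReal (ha j)
    · rw [← hsum, ← sum_filter_pos_mul hk]
      refine Finset.sum_congr rfl fun j hj ↦ ?_
      rw [if_pos (Finset.mem_filter.1 hj).2]
  · rintro ⟨y, hy, hsum⟩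
    exact ⟨y, fun j _ ↦ hy j, (sum_filter_pos_mul hk y).trans hsum⟩

lemma rowBound_le_coe_iff_exists (ha : ∀ j, a j ≠ ⊤) (hk : ∀ j, 0 ≤ k j)
    (hk0 : ∃ j, k j ≠ 0) {c r : ℝ} :
    rowBound a k c ≤ r ↔ ∃ x : ι → ℝ, ∑ j, k j * x j = c ∧ rowObjective a x ≤ r := by
  have hsum : ∑ j with 0 < k j, k j = ∑ j, k j := by
    simpa only [Pi.one_apply, mul_one] using sum_filter_pos_mul hk 1
  have hpos : 0 < ∑ j, k j := by
    obtain ⟨i, hi⟩ := hk0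
    exact Finset.sum_pos' (fun j _ ↦ hk j) ⟨i, Finset.mem_univ i, (hk i).lt_of_ne' hi⟩
  have sum_reflect (x : ι → ℝ) : ∑ j, k j * (r - x j) = (∑ j, k j) * r - ∑ j, k j * x j := by
    simp only [mul_sub, Finset.sum_sub_distrib, Finset.sum_mul]
  rw [rowBound, hsum, add_coe_div_coe_le_coe_iff hpos,
    sum_filter_pos_mul_le_coe_iff_exists ha hk hk0]
  simp only [rowObjective, iSup_le_iff, add_coe_le_coe_iff]
  constructor
  · rintro ⟨y, hy, hyc⟩
    exact ⟨fun j ↦ r - y j, by rw [sum_reflect, hyc]; ring, by simpa using hy⟩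
  · rintro ⟨x, hxc, hx⟩
    exact ⟨fun j ↦ r - x j, hx, by rw [sum_reflect, hxc]⟩

theorem stmt_12_general (ha : ∀ j, a j ≠ ⊤) (hk : ∀ j, 0 ≤ k j) (hk0 : ∃ j, k j ≠ 0) (c : ℝ) :
    IsGLB (rowObjective a '' {x | ∑ j, k j * x j = c}) (rowBound a k c) :=
  isGLB_of_forall_le_coe_iff fun r ↦ by
    rw [Set.exists_mem_image]
    exact rowBound_le_coe_iff_exists ha hk hk0

end SingleRow

theorem stmt_12 {m n : ℕ} (hm : 1 ≤ m) (hn : 1 ≤ n)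
    (A : Matrix (Fin m) (Fin n) EReal) (hA : ∀ i j, A i j ≠ ⊤)
    (k : Fin n → ℝ) (hk : ∀ j, 0 ≤ k j) (hk0 : ∃ j, k j ≠ 0) (c : ℝ)
    (hrow : ∀ i, ∃ j, A i j ≠ ⊥)
    (hcol : ∀ j, (∀ i, A i j = ⊥) → 0 < k j)
    (hsolv : ∃ xt : Fin n → ℝ, IsOptimal A k c xt) :
    ∀ xt : Fin n → ℝ, IsOptimal A k c xt → ∀ i, objF A xt i = glb A k c i := by
  intro xt ⟨hfeas, hopt⟩ i
  have hleast : IsLeast (rowObjective (A i) '' {x | ∑ j, k j * x j = c}) (objF A xt i) :=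
    ⟨Set.mem_image_of_mem _ hfeas, Set.forall_mem_image.2 fun x hx ↦ hopt x hx i⟩
  exact hleast.isGLB.unique (stmt_12_general (hA i) hk hk0 c)
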